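/- Under the hypotheses of the previous abstraction (metric space H, nonempty S ⊆ H with φ|_S = 0 and d(x,S) ≤ Kφ(x), ψ uniformly continuous in the first argument with modulus α), the supremum version holds: sup_{x ∈ S} ψ(x, y) = sup_{x ∈ H} ( ψ(x, y) - α(K·φ(x)) )⁺ whenever ψ ≥ 0, where t⁺ = max(t, 0), i.e. sup_{x ∈ S} ψ(x,y) = sup_{x ∈ H} max(ψ(x,y) - α(Kφ(x)), 0), provided sup_{x∈S} ψ(x,y) ≥ 0. -/

import Mathlib

/-- Quantification Lemma, supremum form: under the same hypotheses as the
infimum version, with `ψ` nonnegative and bounded,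
`sup_{x ∈ S} ψ(x, y) = sup_{x ∈ H} max (ψ(x, y) - α (K φ(x))) 0`. -/
theorem stmt9 {H : Type*} [MetricSpace H] {k : ℕ}
    (S : Set H) (hS : S.Nonempty) (K : ℝ) (φ : H → ℝ)
    (hφ0 : ∀ x, 0 ≤ φ x) (hφS : ∀ x ∈ S, φ x = 0)
    (hd : ∀ x, Metric.infDist x S ≤ K * φ x)
    (α : ℝ → ℝ) (hαc : Continuous α) (hαm : Monotone α) (hα0 : α 0 = 0)
    (ψ : H → (Fin k → H) → ℝ)
    (hmod : ∀ x x' y, |ψ x y - ψ x' y| ≤ α (dist x x'))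
    (hpos : ∀ x y, 0 ≤ ψ x y) (hbdd : ∃ B, ∀ x y, ψ x y ≤ B)
    (y : Fin k → H) :
    (⨆ x : S, ψ x y) = ⨆ x : H, max (ψ x y - α (K * φ x)) 0 := by
  obtain ⟨B, hB⟩ := hbdd
  have : Nonempty S := hS.to_subtype
  have : Nonempty H := ⟨hS.some⟩
  have hbS : BddAbove (Set.range fun x : S => ψ x y) :=
    ⟨B, by rintro _ ⟨x, rfl⟩; exact hB _ _⟩
  have hsup : ∀ x : H, max (ψ x y - α (K * φ x)) 0 ≤ ⨆ x : S, ψ x y := by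
    intro x
    have hnear : ∀ t > Metric.infDist x S, ψ x y - α t ≤ ⨆ x : S, ψ x y := by
      intro t ht
      obtain ⟨s, hs, hst⟩ := (Metric.infDist_lt_iff hS).1 ht
      have h₁ := (abs_le.1 (hmod x s y)).2
      have h₂ := hαm hst.le
      have h₃ : ψ s y ≤ ⨆ x : S, ψ x y := le_ciSup hbS ⟨s, hs⟩
      linarith
    have hlim : ψ x y - α (Metric.infDist x S) ≤ ⨆ x : S, ψ x y :=
      le_of_tendsto
        ((continuous_const.sub hαc).continuousWithinAt (s := Set.Ioi (Metric.infDist x S)))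
        (Filter.eventually_of_mem self_mem_nhdsWithin hnear)
    refine max_le ?_ (Real.iSup_nonneg fun s => hpos _ _)
    have := hαm (hd x)
    linarith
  refine le_antisymm (ciSup_le fun x => ?_) (ciSup_le hsup)
  have hbH : BddAbove (Set.range fun x : H => max (ψ x y - α (K * φ x)) 0) :=
    ⟨_, by rintro _ ⟨x, rfl⟩; exact hsup x⟩
  refine le_trans ?_ (le_ciSup hbH (x : H))
  simp [hφS x x.2, hα0]
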